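/- arXiv:2506.05728 — 6 statements merged into one kernel-verified Lean document; each statement's English description precedes it below -/
import Mathlib

section
/- Let m, n be positive integers, let Σ be a symmetric positive definite real m×m matrix, R a symmetric positive definite real n×n matrix, and C an arbitrary real n×m matrix. Then the matrices Σ⁻¹ + Cᵀ R⁻¹ C and C Σ Cᵀ + R are invertible, and, with the Kalman gain K := Σ Cᵀ (C Σ Cᵀ + R)⁻¹, one has the identity (Σ⁻¹ + Cᵀ R⁻¹ C)⁻¹ = (I − K C) Σ. -/
open Matrix

/-- The information-form covariance update equals the standard Kalman filter
covariance update `(I - K C) Σ`, via the matrix inversion lemma. -/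
theorem stmt_0 (m n : ℕ) (hm : 0 < m) (hn : 0 < n)
    (S : Matrix (Fin m) (Fin m) ℝ) (R : Matrix (Fin n) (Fin n) ℝ)
    (C : Matrix (Fin n) (Fin m) ℝ)
    (hS : S.PosDef) (hR : R.PosDef) :
    IsUnit (S⁻¹ + Cᵀ * R⁻¹ * C) ∧ IsUnit (C * S * Cᵀ + R) ∧
      (S⁻¹ + Cᵀ * R⁻¹ * C)⁻¹ =
        (1 - (S * Cᵀ * (C * S * Cᵀ + R)⁻¹) * C) * S := by
  have h1 : (S⁻¹ + Cᵀ * R⁻¹ * C).PosDef := by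
    have h := hR.inv.posSemidef.conjTranspose_mul_mul_same C
    rw [conjTranspose_eq_transpose_of_trivial] at h
    exact hS.inv.add_posSemidef h
  have h2 : (C * S * Cᵀ + R).PosDef := by
    have h := hS.posSemidef.mul_mul_conjTranspose_same C
    rw [conjTranspose_eq_transpose_of_trivial] at h
    exact PosDef.posSemidef_add h hR
  refine ⟨h1.isUnit, h2.isUnit, ?_⟩
  have eS : S⁻¹⁻¹ = S := nonsing_inv_nonsing_inv S ((isUnit_iff_isUnit_det S).mp hS.isUnit)
  have eR : R⁻¹⁻¹ = R := nonsing_inv_nonsing_inv R ((isUnit_iff_isUnit_det R).mp hR.isUnit)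
  have h3 : IsUnit (R⁻¹⁻¹ + C * S⁻¹⁻¹ * Cᵀ) := by
    rw [eS, eR, add_comm]
    exact h2.isUnit
  rw [add_mul_mul_inv_eq_sub _ _ _ _ hS.inv.isUnit hR.inv.isUnit h3, eS, eR,
    add_comm R, Matrix.sub_mul, Matrix.one_mul]
end

section
/- Let m, n be positive integers, let Σ be a symmetric positive definite real m×m matrix, R a symmetric positive definite real n×n matrix, and C a real n×m matrix. Set Σ⁺ := (Σ⁻¹ + Cᵀ R⁻¹ C)⁻¹ and K := Σ Cᵀ (C Σ Cᵀ + R)⁻¹. Then for all x ∈ ℝ^m and z ∈ ℝ^n, xᵀ Σ⁻¹ x + (z − C x)ᵀ R⁻¹ (z − C x) = (x − K z)ᵀ (Σ⁺)⁻¹ (x − K z) + zᵀ (C Σ Cᵀ + R)⁻¹ z. -/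
open Matrix

/-- Completion-of-squares identity underlying the Bayesian fusion in the EKF
update step. Here `Σ⁺ = (Σ⁻¹ + Cᵀ R⁻¹ C)⁻¹` and `K = Σ Cᵀ (C Σ Cᵀ + R)⁻¹`. -/
theorem stmt_2 (m n : ℕ) (hm : 0 < m) (hn : 0 < n)
    (S : Matrix (Fin m) (Fin m) ℝ) (R : Matrix (Fin n) (Fin n) ℝ)
    (C : Matrix (Fin n) (Fin m) ℝ)
    (hS : S.PosDef) (hR : R.PosDef) :
    let Sp : Matrix (Fin m) (Fin m) ℝ := (S⁻¹ + Cᵀ * R⁻¹ * C)⁻¹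
    let K : Matrix (Fin m) (Fin n) ℝ := S * Cᵀ * (C * S * Cᵀ + R)⁻¹
    ∀ (x : Fin m → ℝ) (z : Fin n → ℝ),
      x ⬝ᵥ (S⁻¹ *ᵥ x) + (z - C *ᵥ x) ⬝ᵥ (R⁻¹ *ᵥ (z - C *ᵥ x)) =
        (x - K *ᵥ z) ⬝ᵥ (Sp⁻¹ *ᵥ (x - K *ᵥ z)) +
          z ⬝ᵥ ((C * S * Cᵀ + R)⁻¹ *ᵥ z) := by
  intro Sp K x z
  have hSd : IsUnit S.det := (Matrix.isUnit_iff_isUnit_det S).1 hS.isUnit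
  have hRd : IsUnit R.det := (Matrix.isUnit_iff_isUnit_det R).1 hR.isUnit
  have hSt : Sᵀ = S := by simpa using hS.isHermitian.eq
  have hRt : Rᵀ = R := by simpa using hR.isHermitian.eq
  have hW : (C * S * Cᵀ + R).PosDef := by
    have h := hS.posSemidef.mul_mul_conjTranspose_same C
    rw [conjTranspose_eq_transpose_of_trivial] at h
    exact Matrix.PosDef.posSemidef_add h hR
  have hP : (S⁻¹ + Cᵀ * R⁻¹ * C).PosDef := by
    have h := hR.inv.posSemidef.conjTranspose_mul_mul_same C
    rw [conjTranspose_eq_transpose_of_trivial] at h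
    exact hS.inv.add_posSemidef h
  have hWd := (Matrix.isUnit_iff_isUnit_det _).1 hW.isUnit
  have hPd := (Matrix.isUnit_iff_isUnit_det _).1 hP.isUnit
  have hSp : Sp⁻¹ = S⁻¹ + Cᵀ * R⁻¹ * C := Matrix.nonsing_inv_nonsing_inv _ hPd
  rw [hSp]
  obtain ⟨w, hw⟩ : ∃ w, w = (C * S * Cᵀ + R)⁻¹ *ᵥ z := ⟨_, rfl⟩
  have hz : z = C *ᵥ (S *ᵥ (Cᵀ *ᵥ w)) + R *ᵥ w := by
    have : z = (C * S * Cᵀ + R) *ᵥ w := by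
      rw [hw, mulVec_mulVec, Matrix.mul_nonsing_inv _ hWd, one_mulVec]
    rw [this, add_mulVec]
    simp only [mulVec_mulVec, Matrix.mul_assoc]
  have hK : K *ᵥ z = S *ᵥ (Cᵀ *ᵥ w) := by
    rw [hw]
    simp only [K, mulVec_mulVec, Matrix.mul_assoc]
  rw [hK, ← hw]
  obtain ⟨u, hu⟩ : ∃ u, u = x - S *ᵥ (Cᵀ *ᵥ w) := ⟨_, rfl⟩
  have hx : x = u + S *ᵥ (Cᵀ *ᵥ w) := by rw [hu]; abel
  have hzx : z - C *ᵥ x = R *ᵥ w - C *ᵥ u := by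
    rw [hx, hz, mulVec_add]; abel
  rw [← hu, hzx, hx, hz]
  have adj : ∀ (a : Fin m → ℝ) (b : Fin n → ℝ), a ⬝ᵥ (Cᵀ *ᵥ b) = (C *ᵥ a) ⬝ᵥ b := by
    intro a b
    rw [dotProduct_mulVec, vecMul_transpose]
  have h1 : ∀ a, S⁻¹ *ᵥ (S *ᵥ a) = a := by
    intro a; rw [mulVec_mulVec, Matrix.nonsing_inv_mul _ hSd, one_mulVec]
  have h2 : ∀ a, R⁻¹ *ᵥ (R *ᵥ a) = a := by
    intro a; rw [mulVec_mulVec, Matrix.nonsing_inv_mul _ hRd, one_mulVec]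
  have h3 : ∀ a b, (S *ᵥ a) ⬝ᵥ (S⁻¹ *ᵥ b) = a ⬝ᵥ b := by
    intro a b
    rw [← vecMul_transpose, hSt, ← dotProduct_mulVec, mulVec_mulVec,
      Matrix.mul_nonsing_inv _ hSd, one_mulVec]
  have h4 : ∀ a b, (R *ᵥ a) ⬝ᵥ (R⁻¹ *ᵥ b) = a ⬝ᵥ b := by
    intro a b
    rw [← vecMul_transpose, hRt, ← dotProduct_mulVec, mulVec_mulVec,
      Matrix.mul_nonsing_inv _ hRd, one_mulVec]
  have h5 : (Cᵀ * R⁻¹ * C) *ᵥ u = Cᵀ *ᵥ (R⁻¹ *ᵥ (C *ᵥ u)) := by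
    simp only [mulVec_mulVec, Matrix.mul_assoc]
  have h6 : (Cᵀ *ᵥ w) ⬝ᵥ u = (C *ᵥ u) ⬝ᵥ w := by rw [dotProduct_comm, adj]
  have h7 : w ⬝ᵥ (C *ᵥ u) = (C *ᵥ u) ⬝ᵥ w := dotProduct_comm _ _
  simp only [mulVec_add, mulVec_sub, add_mulVec, h1, h2, h5, add_dotProduct, dotProduct_add,
    sub_dotProduct, dotProduct_sub, h3, h4, h6, adj, h7]
  ring
end

section
/- Let m be a positive integer and let S, Σ be symmetric positive definite real m×m matrices. Then trace((Σ⁻¹ − Σ⁻¹ S Σ⁻¹) W) = 0 for every symmetric real m×m matrix W if and only if Σ = S. -/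
open Matrix

/-- The directional derivative `tr((Σ⁻¹ - Σ⁻¹ S Σ⁻¹) W)` of the KL divergence
vanishes in every symmetric direction `W` iff `Σ = S`. -/
theorem stmt_6 (m : ℕ) (hm : 0 < m)
    (S Sg : Matrix (Fin m) (Fin m) ℝ) (hS : S.PosDef) (hSg : Sg.PosDef) :
    (∀ W : Matrix (Fin m) (Fin m) ℝ, W.IsSymm →
        ((Sg⁻¹ - Sg⁻¹ * S * Sg⁻¹) * W).trace = 0) ↔ Sg = S := by
  have hu : IsUnit Sg.det := (Matrix.isUnit_iff_isUnit_det Sg).1 hSg.isUnit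
  constructor
  · intro h
    have hi : (Sg⁻¹)ᴴ = Sg⁻¹ := hSg.isHermitian.inv
    have hM : (Sg⁻¹ - Sg⁻¹ * S * Sg⁻¹)ᴴ = Sg⁻¹ - Sg⁻¹ * S * Sg⁻¹ := by
      rw [conjTranspose_sub, conjTranspose_mul, conjTranspose_mul, hi, hS.isHermitian.eq,
        Matrix.mul_assoc]
    have h1 := h (Sg⁻¹ - Sg⁻¹ * S * Sg⁻¹) (by
      rw [conjTranspose_eq_transpose_of_trivial] at hM
      exact hM)
    have h2 : Sg⁻¹ - Sg⁻¹ * S * Sg⁻¹ = 0 := by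
      apply Matrix.trace_conjTranspose_mul_self_eq_zero_iff.1
      rw [hM]
      exact h1
    have h3 : Sg * (Sg⁻¹ * S * Sg⁻¹) * Sg = S := by
      rw [Matrix.mul_assoc Sg⁻¹, Matrix.mul_nonsing_inv_cancel_left _ _ hu,
        Matrix.nonsing_inv_mul_cancel_right _ _ hu]
    rw [← sub_eq_zero.1 h2, Matrix.mul_nonsing_inv _ hu, Matrix.one_mul] at h3
    exact h3
  · rintro rfl W _
    rw [Matrix.nonsing_inv_mul _ hu, Matrix.one_mul, sub_self, Matrix.zero_mul, Matrix.trace_zero]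
end

section
/- Let m be a positive integer and let S, Σ be symmetric positive definite real m×m matrices. Then log(det Σ) + trace(Σ⁻¹ S) ≥ log(det S) + m, with equality if and only if Σ = S. -/
open Matrix

open scoped MatrixOrder in
/-- A positive definite matrix factors as `star B * B`. -/
theorem aux_factor {m : ℕ} (M : Matrix (Fin m) (Fin m) ℝ) (hM : M.PosDef) :
    ∃ B : Matrix (Fin m) (Fin m) ℝ, M = star B * B :=
  CStarAlgebra.nonneg_iff_eq_star_mul_self.mp hM.posSemidef.nonneg

/-- The case of identity covariance. -/
theorem aux_one {m : ℕ} (A : Matrix (Fin m) (Fin m) ℝ) (hA : A.PosDef) :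
    Real.log A.det + m ≤ A.trace ∧ (A.trace = Real.log A.det + m → A = 1) := by
  have hpos := hA.eigenvalues_pos
  have hdet : Real.log A.det = ∑ i, Real.log (hA.1.eigenvalues i) := by
    rw [hA.1.det_eq_prod_eigenvalues]
    exact Real.log_prod (fun i _ => (hpos i).ne')
  have htr : A.trace = ∑ i, hA.1.eigenvalues i := by
    simpa using hA.1.trace_eq_sum_eigenvalues
  have hle : ∀ i ∈ Finset.univ, Real.log (hA.1.eigenvalues i) + 1 ≤ hA.1.eigenvalues i := by
    intro i _
    linarith [Real.log_le_sub_one_of_pos (hpos i)]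
  have hsum : Real.log A.det + m = ∑ i, (Real.log (hA.1.eigenvalues i) + 1) := by
    simp [hdet, Finset.sum_add_distrib]
  rw [hsum, htr]
  refine ⟨Finset.sum_le_sum hle, fun h => ?_⟩
  have h1 := (Finset.sum_eq_sum_iff_of_le hle).1 h.symm
  have h2 : hA.1.eigenvalues = fun _ => 1 := by
    funext i
    by_contra hne
    have := Real.log_lt_sub_one_of_pos (hpos i) hne
    linarith [h1 i (Finset.mem_univ i)]
  have h3 := hA.1.spectral_theorem
  have h4 : (diagonal (RCLike.ofReal ∘ hA.1.eigenvalues) : Matrix (Fin m) (Fin m) ℝ) = 1 := by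
    rw [h2, ← diagonal_one]
    rfl
  rw [h4, map_one] at h3
  exact h3

/-- `log det Σ + tr(Σ⁻¹ S) ≥ log det S + m`, with equality iff `Σ = S`:
the matched covariance is the unique minimizer of the Gaussian KL objective. -/
theorem stmt_7 (m : ℕ) (hm : 0 < m)
    (S Sg : Matrix (Fin m) (Fin m) ℝ) (hS : S.PosDef) (hSg : Sg.PosDef) :
    Real.log S.det + m ≤ Real.log Sg.det + (Sg⁻¹ * S).trace ∧
      (Real.log Sg.det + (Sg⁻¹ * S).trace = Real.log S.det + m ↔ Sg = S) := by
  obtain ⟨B, hB⟩ := aux_factor Sg⁻¹ hSg.inv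
  have hu : IsUnit Sg.det := hSg.det_pos.ne'.isUnit
  have hBu : IsUnit B := by
    have h : Sg * star B * B = 1 := by rw [mul_assoc, ← hB, mul_nonsing_inv _ hu]
    exact IsUnit.of_mul_eq_one_right _ h
  have hA : (B * S * star B).PosDef := (IsUnit.posDef_star_right_conjugate_iff hBu).2 hS
  have htr : (B * S * star B).trace = (Sg⁻¹ * S).trace := by
    rw [hB, trace_mul_cycle]
  have hdet : Real.log (B * S * star B).det = Real.log S.det - Real.log Sg.det := by
    have : (B * S * star B).det = S.det / Sg.det := by
      have h := congrArg det hB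
      rw [det_nonsing_inv, Ring.inverse_eq_inv', det_mul] at h
      rw [det_mul, det_mul, div_eq_mul_inv, h]
      ring
    rw [this, Real.log_div hS.det_pos.ne' hSg.det_pos.ne']
  obtain ⟨h1, h2⟩ := aux_one _ hA
  rw [htr, hdet] at h1 h2
  refine ⟨by linarith, fun h => ?_, fun h => ?_⟩
  · have h3 := h2 (by linarith)
    rw [mul_assoc, mul_eq_one_comm, mul_assoc, ← hB] at h3
    calc Sg = (S * Sg⁻¹) * Sg := by rw [h3, one_mul]
      _ = S := by rw [mul_assoc, nonsing_inv_mul _ hu, mul_one]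
  · subst h
    rw [nonsing_inv_mul _ hu]
    simp
end

section
/- Let m be a positive integer and let p be a probability measure on ℝ^m with ∫ ‖x‖² dp(x) < ∞. Let m̄ := ∫ x dp(x) be its mean and S := ∫ (x − m̄)(x − m̄)ᵀ dp(x) its covariance matrix, and assume S is positive definite. For μ ∈ ℝ^m and a symmetric positive definite real m×m matrix Σ, write q_{μ,Σ}(x) := (2π)^{−m/2} (det Σ)^{−1/2} exp(−½ (x − μ)ᵀ Σ⁻¹ (x − μ)). Then for every such (μ, Σ), −∫ log q_{μ,Σ}(x) dp(x) ≥ −∫ log q_{m̄,S}(x) dp(x), with equality if and only if μ = m̄ and Σ = S. -/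
open Matrix MeasureTheory

section Helpers
open scoped MatrixOrder ComplexOrder Matrix.Norms.L2Operator

lemma exists_factor {m : ℕ} {A : Matrix (Fin m) (Fin m) ℝ} (hA : A.PosDef) :
    ∃ B : Matrix (Fin m) (Fin m) ℝ, IsUnit B ∧ A = Bᴴ * B := by
  obtain ⟨B, hB, h⟩ := CStarAlgebra.isStrictlyPositive_iff_eq_star_mul_self.mp
    hA.isStrictlyPositive
  exact ⟨B, hB, h⟩

end Helpers

lemma posDef_log_det {m : ℕ} {M : Matrix (Fin m) (Fin m) ℝ} (hM : M.PosDef) :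
    (m : ℝ) + Real.log M.det ≤ M.trace ∧ ((m : ℝ) + Real.log M.det = M.trace → M = 1) := by
  have hpos := hM.eigenvalues_pos
  have hdet : Real.log M.det = ∑ i, Real.log (hM.1.eigenvalues i) := by
    rw [hM.1.det_eq_prod_eigenvalues]
    exact Real.log_prod (fun i _ => (hpos i).ne')
  have htr : M.trace = ∑ i, hM.1.eigenvalues i := hM.1.trace_eq_sum_eigenvalues
  have hnn : ∀ i ∈ Finset.univ,
      0 ≤ hM.1.eigenvalues i - 1 - Real.log (hM.1.eigenvalues i) := fun i _ => by
    linarith [Real.log_le_sub_one_of_pos (hpos i)]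
  have hsum : ∑ i, (hM.1.eigenvalues i - 1 - Real.log (hM.1.eigenvalues i))
      = M.trace - m - Real.log M.det := by
    rw [Finset.sum_sub_distrib, Finset.sum_sub_distrib, ← hdet, ← htr]; simp
  refine ⟨by linarith [Finset.sum_nonneg hnn], fun h => ?_⟩
  have h0 := (Finset.sum_eq_zero_iff_of_nonneg hnn).1 (by rw [hsum]; linarith)
  have h1 : ∀ i, hM.1.eigenvalues i = 1 := fun i => by
    by_contra hne
    linarith [Real.log_lt_sub_one_of_pos (hpos i) hne, h0 i (Finset.mem_univ i)]
  have h2 : hM.1.eigenvalues = fun _ => 1 := funext h1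
  rw [hM.1.spectral_theorem, h2]
  have : (diagonal (RCLike.ofReal ∘ fun _ => (1 : ℝ)) : Matrix (Fin m) (Fin m) ℝ) = 1 := by
    ext i j; simp [Matrix.diagonal_apply, Matrix.one_apply]
  rw [this, map_one]

lemma posDef_mul_log_det {m : ℕ} {A S : Matrix (Fin m) (Fin m) ℝ} (hA : A.PosDef)
    (hS : S.PosDef) :
    (m : ℝ) + Real.log (A * S).det ≤ (A * S).trace ∧
      ((m : ℝ) + Real.log (A * S).det = (A * S).trace → A * S = 1) := by
  obtain ⟨B, hB, rfl⟩ := exists_factor hA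
  have hM : (B * S * Bᴴ).PosDef :=
    hS.mul_mul_conjTranspose_same (Matrix.vecMul_injective_of_isUnit hB)
  have h1 : (B * S * Bᴴ).det = (Bᴴ * B * S).det := by
    simp only [Matrix.det_mul]; ring
  have h2 : (B * S * Bᴴ).trace = (Bᴴ * B * S).trace := by
    rw [Matrix.trace_mul_comm, Matrix.mul_assoc]
  have := posDef_log_det hM
  rw [h1, h2] at this
  refine ⟨this.1, fun h => ?_⟩
  have h3 := this.2 h
  rw [mul_eq_one_comm] at h3
  rw [Matrix.mul_assoc, h3]

/-- The Gaussian with matched mean and covariance is the unique minimizer of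
the cross-entropy `-E_p[log q_{μ,Σ}]` (equivalently, of `KL(p‖q_{μ,Σ})`) over
the Gaussian family. -/
theorem stmt_10 (m : ℕ) (hm : 0 < m)
    (p : Measure (Fin m → ℝ)) [IsProbabilityMeasure p]
    (h2 : Integrable (fun x : Fin m → ℝ => ‖x‖ ^ 2) p) :
    let mb : Fin m → ℝ := ∫ x, x ∂p
    let S : Matrix (Fin m) (Fin m) ℝ :=
      Matrix.of fun i j => ∫ x, (x i - mb i) * (x j - mb j) ∂p
    let q : (Fin m → ℝ) → Matrix (Fin m) (Fin m) ℝ → (Fin m → ℝ) → ℝ :=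
      fun μ Sg x =>
        (2 * Real.pi) ^ (-(m : ℝ) / 2) * Sg.det ^ (-(1 : ℝ) / 2) *
          Real.exp (-(1 / 2) * ((x - μ) ⬝ᵥ (Sg⁻¹ *ᵥ (x - μ))))
    S.PosDef →
    ∀ (μ : Fin m → ℝ) (Sg : Matrix (Fin m) (Fin m) ℝ), Sg.PosDef →
      (-(∫ x, Real.log (q mb S x) ∂p) ≤ -(∫ x, Real.log (q μ Sg x) ∂p)) ∧
      ((-(∫ x, Real.log (q μ Sg x) ∂p) = -(∫ x, Real.log (q mb S x) ∂p)) ↔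
        (μ = mb ∧ Sg = S)) := by
  intro mb S q hS μ Sg hSg
  have hL2 : ∀ i, MemLp (fun x : Fin m → ℝ => x i) 2 p := fun i => by
    have hid : MemLp (fun x : Fin m → ℝ => x) 2 p :=
      (memLp_two_iff_integrable_sq_norm (by fun_prop)).2 h2
    exact hid.mono (measurable_pi_apply i).aestronglyMeasurable (Filter.Eventually.of_forall fun x => norm_le_pi_norm x i)
  have hI : ∀ i, Integrable (fun x : Fin m → ℝ => x i) p :=
    fun i => (hL2 i).integrable (by norm_num)
  have hmb : ∀ i, mb i = ∫ x, x i ∂p := fun i => eval_integral hI i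
  have hII : ∀ (ν : Fin m → ℝ) i j,
      Integrable (fun x : Fin m → ℝ => (x i - ν i) * (x j - ν j)) p := fun ν i j =>
    ((hL2 i).sub (memLp_const (ν i))).integrable_mul ((hL2 j).sub (memLp_const (ν j)))
  have hmom : ∀ (ν : Fin m → ℝ) i j, ∫ x, (x i - ν i) * (x j - ν j) ∂p
      = S i j + (mb i - ν i) * (mb j - ν j) := fun ν i j => by
    have e : ∀ x : Fin m → ℝ, (x i - ν i) * (x j - ν j) = (x i - mb i) * (x j - mb j)
        + ((mb j - ν j) * (x i - mb i) + (mb i - ν i) * (x j - mb j)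
        + (mb i - ν i) * (mb j - ν j)) := fun x => by ring
    have c : ∀ i, Integrable (fun x : Fin m → ℝ => x i - mb i) p :=
      fun i => (hI i).sub (integrable_const _)
    have z : ∀ i, ∫ x : Fin m → ℝ, (x i - mb i) ∂p = 0 := fun i => by
      rw [integral_sub (hI i) (integrable_const _), ← hmb]; simp
    rw [integral_congr_ae (Filter.Eventually.of_forall e)]
    have i1 : Integrable (fun x : Fin m → ℝ =>
        (mb j - ν j) * (x i - mb i) + (mb i - ν i) * (x j - mb j)) p :=
      ((c i).const_mul _).add ((c j).const_mul _)
    have i2 : Integrable (fun x : Fin m → ℝ => (mb j - ν j) * (x i - mb i)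
        + (mb i - ν i) * (x j - mb j) + (mb i - ν i) * (mb j - ν j)) p :=
      i1.add (integrable_const _)
    rw [integral_add (hII mb i j) i2, integral_add i1 (integrable_const _),
      integral_add ((c i).const_mul _) ((c j).const_mul _),
      integral_const_mul, integral_const_mul, z, z]
    simp [S]
  have hquad : ∀ (ν : Fin m → ℝ) (A : Matrix (Fin m) (Fin m) ℝ) (x : Fin m → ℝ),
      (x - ν) ⬝ᵥ (A *ᵥ (x - ν)) = ∑ i, ∑ j, A i j * ((x i - ν i) * (x j - ν j)) := by
    intro ν A x
    simp only [dotProduct, mulVec, Finset.mul_sum, Pi.sub_apply]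
    exact Finset.sum_congr rfl fun i _ => Finset.sum_congr rfl fun j _ => by ring
  have hSsymm : ∀ i j, S i j = S j i := fun i j => by
    simp only [S, Matrix.of_apply, mul_comm]
  have hqi : ∀ (ν : Fin m → ℝ) (A : Matrix (Fin m) (Fin m) ℝ),
      Integrable (fun x => (x - ν) ⬝ᵥ (A *ᵥ (x - ν))) p := fun ν A => by
    simp_rw [hquad]
    exact integrable_finsetSum _ fun i _ => integrable_finsetSum _ fun j _ =>
      (hII ν i j).const_mul _
  have hqint : ∀ (ν : Fin m → ℝ) (A : Matrix (Fin m) (Fin m) ℝ),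
      ∫ x, (x - ν) ⬝ᵥ (A *ᵥ (x - ν)) ∂p
        = (A * S).trace + (mb - ν) ⬝ᵥ (A *ᵥ (mb - ν)) := fun ν A => by
    rw [hquad ν A mb]
    simp_rw [hquad]
    rw [integral_finsetSum _ fun i _ => integrable_finsetSum Finset.univ fun j _ =>
      (hII ν i j).const_mul (A i j)]
    simp only [Matrix.trace, Matrix.diag, Matrix.mul_apply]
    rw [← Finset.sum_add_distrib]
    refine Finset.sum_congr rfl fun i _ => ?_
    rw [integral_finsetSum _ fun j _ => (hII ν i j).const_mul (A i j), ← Finset.sum_add_distrib]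
    refine Finset.sum_congr rfl fun j _ => ?_
    rw [integral_const_mul, hmom, hSsymm i j]; ring
  have hlog : ∀ (ν : Fin m → ℝ) (T : Matrix (Fin m) (Fin m) ℝ), T.PosDef →
      -(∫ x, Real.log (q ν T x) ∂p) = (m : ℝ) / 2 * Real.log (2 * Real.pi)
        + 1 / 2 * Real.log T.det
        + 1 / 2 * ((T⁻¹ * S).trace + (mb - ν) ⬝ᵥ (T⁻¹ *ᵥ (mb - ν))) := by
    intro ν T hT
    have hd := hT.det_pos
    have hpi : 0 < 2 * Real.pi := by positivity
    have e : ∀ x, Real.log (q ν T x) = (-(m : ℝ) / 2 * Real.log (2 * Real.pi)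
        + -(1 : ℝ) / 2 * Real.log T.det) + -(1 / 2) * ((x - ν) ⬝ᵥ (T⁻¹ *ᵥ (x - ν))) := by
      intro x
      simp only [q]
      rw [Real.log_mul (by positivity) (by positivity), Real.log_mul (by positivity)
        (by positivity), Real.log_exp, Real.log_rpow hpi, Real.log_rpow hd]
    simp_rw [e]
    rw [integral_add (integrable_const _) ((hqi ν _).const_mul _), integral_const_mul, hqint]
    simp
    ring
  rw [hlog μ Sg hSg, hlog mb S hS]
  have hSdet := hS.det_pos
  have hSgdet := hSg.det_pos
  have hSS : S⁻¹ * S = 1 := Matrix.nonsing_inv_mul _ hSdet.ne'.isUnit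
  have hSgSg : Sg * Sg⁻¹ = 1 := Matrix.mul_nonsing_inv _ hSgdet.ne'.isUnit
  obtain ⟨k1, k2⟩ := posDef_mul_log_det hSg.inv hS
  have hld : Real.log (Sg⁻¹ * S).det = Real.log S.det - Real.log Sg.det := by
    rw [Matrix.det_mul, Matrix.det_nonsing_inv, Ring.inverse_eq_inv',
      Real.log_mul (by positivity) (by positivity), Real.log_inv]
    ring
  have hdnn : 0 ≤ (mb - μ) ⬝ᵥ (Sg⁻¹ *ᵥ (mb - μ)) := by
    simpa using hSg.inv.posSemidef.dotProduct_mulVec_nonneg (mb - μ)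
  have htr1 : (1 : Matrix (Fin m) (Fin m) ℝ).trace = m := by simp
  rw [hSS, htr1, sub_self, zero_dotProduct]
  rw [hld] at k1 k2
  refine ⟨by linarith, fun h => ?_, ?_⟩
  · have hone := k2 (by linarith)
    constructor
    · by_contra hne
      have : 0 < (mb - μ) ⬝ᵥ (Sg⁻¹ *ᵥ (mb - μ)) := by
        simpa using hSg.inv.dotProduct_mulVec_pos (x := mb - μ)
          (sub_ne_zero.2 (Ne.symm hne))
      linarith
    · calc Sg = Sg * (Sg⁻¹ * S) := by rw [hone, Matrix.mul_one]
        _ = S := by rw [← Matrix.mul_assoc, hSgSg, Matrix.one_mul]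
  · rintro ⟨rfl, rfl⟩
    rw [hSS, htr1, sub_self, zero_dotProduct]
end

section
/- Let m be a positive integer, let γ denote the product probability measure on ℝ^m whose coordinates are i.i.d. standard real Gaussians N(0,1), let A be a real m×m matrix with Σ := A Aᵀ, and for z ∈ ℝ^m write x := A z. Let θ : ℝ^m → ℝ^m be a map each of whose components is a polynomial in the coordinates, with θ(0) = 0, and let L := Dθ(0) be its Fréchet derivative at 0. Then there exists a constant C ≥ 0 such that for every t ∈ (0, 1] and all i, j ∈ Fin m, |∫ θ(√t · x)_i θ(√t · x)_j dγ(z) − t (L Σ Lᵀ)_{i j}| ≤ C t². -/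
open Matrix MeasureTheory ProbabilityTheory

instance gaussianStd_isNegInvariant : (gaussianReal 0 1).IsNegInvariant :=
  ⟨by
    rw [Measure.neg]
    have := gaussianReal_map_neg (μ := 0) (v := 1)
    rw [neg_zero] at this
    exact this⟩

lemma integrable_eval_gauss {m : ℕ} (p : MvPolynomial (Fin m) ℝ) :
    Integrable (fun z => MvPolynomial.eval z p)
      (Measure.pi fun _ : Fin m => gaussianReal 0 1) := by
  simp_rw [MvPolynomial.eval_eq']
  refine integrable_finsetSum _ fun d _ => Integrable.const_mul ?_ _
  refine Integrable.fintype_prod (f := fun i (x : ℝ) => x ^ d i) fun i => ?_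
  have h := (memLp_id_gaussianReal (μ := 0) (v := 1) (d i : NNReal))
  rcases Nat.eq_zero_or_pos (d i) with h0 | h0
  · simp [h0]
  · have := MemLp.integrable_norm_pow (f := (id : ℝ → ℝ)) (p := d i) (by exact_mod_cast h) h0.ne'
    refine this.mono (by fun_prop) (Filter.Eventually.of_forall fun x => ?_)
    simp

lemma eval_mulVec_eq {m : ℕ} (A : Matrix (Fin m) (Fin m) ℝ) (p : MvPolynomial (Fin m) ℝ)
    (z : Fin m → ℝ) : MvPolynomial.eval (A *ᵥ z) p =
      MvPolynomial.eval z (MvPolynomial.bind₁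
        (fun i => ∑ k, MvPolynomial.C (A i k) * MvPolynomial.X k) p) := by
  rw [← MvPolynomial.coe_aeval_eq_eval, ← MvPolynomial.coe_aeval_eq_eval]
  simp only [RingHom.coe_coe]
  rw [MvPolynomial.aeval_bind₁]
  congr 2
  ext i
  simp [Matrix.mulVec, dotProduct]

lemma integrable_eval_mul {m : ℕ} (A : Matrix (Fin m) (Fin m) ℝ) (p q : MvPolynomial (Fin m) ℝ) :
    Integrable (fun z => MvPolynomial.eval (A *ᵥ z) p * MvPolynomial.eval (A *ᵥ z) q)
      (Measure.pi fun _ : Fin m => gaussianReal 0 1) := by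
  simp_rw [← map_mul, eval_mulVec_eq]
  exact integrable_eval_gauss _

lemma eval_smul_hom {m n : ℕ} {p : MvPolynomial (Fin m) ℝ} (hp : p.IsHomogeneous n) (s : ℝ)
    (x : Fin m → ℝ) : MvPolynomial.eval (s • x) p = s ^ n * MvPolynomial.eval x p := by
  rw [MvPolynomial.eval_eq', MvPolynomial.eval_eq', Finset.mul_sum]
  refine Finset.sum_congr rfl fun d hd => ?_
  have h : d.degree = n := by
    rw [Finsupp.degree_eq_weight_one]
    exact hp (MvPolynomial.mem_support_iff.1 hd)
  have h2 : ∑ i, d i = n := by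
    rw [← h, Finsupp.degree_eq_sum]
  simp only [Pi.smul_apply, smul_eq_mul, mul_pow, Finset.prod_mul_distrib,
    Finset.prod_pow_eq_pow_sum, h2]
  ring

lemma eval_smul_sum {m : ℕ} (p : MvPolynomial (Fin m) ℝ) (s : ℝ) (x : Fin m → ℝ) :
    MvPolynomial.eval (s • x) p = ∑ n ∈ Finset.range (p.totalDegree + 1),
      s ^ n * MvPolynomial.eval x (MvPolynomial.homogeneousComponent n p) := by
  conv_lhs => rw [← MvPolynomial.sum_homogeneousComponent p]
  rw [map_sum]
  exact Finset.sum_congr rfl fun n _ =>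
    eval_smul_hom (MvPolynomial.homogeneousComponent_isHomogeneous n p) s x

lemma eval_hom_one {m : ℕ} (p : MvPolynomial (Fin m) ℝ) (l : (Fin m → ℝ) →L[ℝ] ℝ)
    (h : HasFDerivAt (fun v => MvPolynomial.eval v p) l 0) (x : Fin m → ℝ) :
    MvPolynomial.eval x (MvPolynomial.homogeneousComponent 1 p) = l x := by
  have h1 : HasDerivAt (fun s : ℝ => MvPolynomial.eval (s • x) p) (l x) 0 := by
    have hs : HasDerivAt (fun s : ℝ => s • x) x 0 := by
      simpa using (hasDerivAt_id (0 : ℝ)).smul_const x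
    have h' : HasFDerivAt (fun v => MvPolynomial.eval v p) l ((0 : ℝ) • x) := by simpa using h
    exact h'.comp_hasDerivAt (0 : ℝ) hs
  have h2 : HasDerivAt (fun s : ℝ => MvPolynomial.eval (s • x) p)
      (∑ n ∈ Finset.range (p.totalDegree + 1), (n * (0 : ℝ) ^ (n - 1)) *
        MvPolynomial.eval x (MvPolynomial.homogeneousComponent n p)) 0 := by
    simp_rw [eval_smul_sum]
    exact HasDerivAt.fun_sum fun n _ => (hasDerivAt_pow n (0 : ℝ)).mul_const _
  rw [h1.unique h2, Finset.sum_eq_single 1]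
  · simp
  · intro n _ hn
    rcases n with _ | _ | n <;> simp_all
  · intro hn
    rw [MvPolynomial.homogeneousComponent_eq_zero]
    · simp
    · simp at hn; omega

lemma gauss_second_moment {m : ℕ} (k l : Fin m) :
    ∫ z, z k * z l ∂(Measure.pi fun _ : Fin m => gaussianReal 0 1) = if k = l then 1 else 0 := by
  have hm : ∫ x, x ∂(gaussianReal 0 1) = 0 := integral_id_gaussianReal
  split_ifs with h
  · subst h
    rw [integral_comp_eval (μ := fun _ : Fin m => gaussianReal 0 1) (i := k)
      (f := fun x : ℝ => x * x) (by fun_prop)]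
    have hv := variance_id_gaussianReal (μ := 0) (v := 1)
    rw [variance_of_integral_eq_zero (X := id) (by fun_prop) hm] at hv
    simpa [sq] using hv
  · have hi := (iIndepFun_pi (μ := fun _ : Fin m => gaussianReal 0 1) (X := fun _ x => x)
      (fun _ => by fun_prop)).indepFun h
    have := hi.integral_fun_mul_eq_mul_integral
      (measurable_pi_apply k).aestronglyMeasurable (measurable_pi_apply l).aestronglyMeasurable
    rw [this, integral_comp_eval (μ := fun _ : Fin m => gaussianReal 0 1) (i := k)
      (f := fun x : ℝ => x) (by fun_prop), hm, zero_mul]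

lemma gauss_linear {m : ℕ} (B : Matrix (Fin m) (Fin m) ℝ) (i j : Fin m) :
    ∫ z, (B *ᵥ z) i * (B *ᵥ z) j ∂(Measure.pi fun _ : Fin m => gaussianReal 0 1)
      = (B * Bᵀ) i j := by
  have hI : ∀ k l : Fin m, Integrable (fun z : Fin m → ℝ => z k * z l)
      (Measure.pi fun _ : Fin m => gaussianReal 0 1) := fun k l => by
    have h := integrable_eval_gauss (MvPolynomial.X k * MvPolynomial.X l)
    simp only [map_mul, MvPolynomial.eval_X] at h
    exact h
  have he : ∀ z : Fin m → ℝ, (B *ᵥ z) i * (B *ᵥ z) j =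
      ∑ k, ∑ l, (B i k * B j l) * (z k * z l) := fun z => by
    simp only [Matrix.mulVec, dotProduct, Finset.sum_mul_sum]
    refine Finset.sum_congr rfl fun k _ => Finset.sum_congr rfl fun l _ => by ring
  simp_rw [he]
  rw [integral_finsetSum _ fun k _ => integrable_finsetSum _ fun l _ => (hI k l).const_mul _]
  simp_rw [Matrix.mul_apply, Matrix.transpose_apply]
  refine Finset.sum_congr rfl fun k _ => ?_
  rw [integral_finsetSum _ fun l _ => (hI k l).const_mul _]
  simp_rw [integral_const_mul, gauss_second_moment]
  simp

lemma gauss_odd {m a b : ℕ} (A : Matrix (Fin m) (Fin m) ℝ) {p q : MvPolynomial (Fin m) ℝ}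
    (hp : p.IsHomogeneous a) (hq : q.IsHomogeneous b) (hab : Odd (a + b)) :
    ∫ z, MvPolynomial.eval (A *ᵥ z) p * MvPolynomial.eval (A *ᵥ z) q
      ∂(Measure.pi fun _ : Fin m => gaussianReal 0 1) = 0 := by
  have h := integral_neg_eq_self
    (fun z => MvPolynomial.eval (A *ᵥ z) p * MvPolynomial.eval (A *ᵥ z) q)
    (Measure.pi fun _ : Fin m => gaussianReal 0 1)
  have he : ∀ z : Fin m → ℝ,
      MvPolynomial.eval (A *ᵥ (-z)) p * MvPolynomial.eval (A *ᵥ (-z)) q =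
      - (MvPolynomial.eval (A *ᵥ z) p * MvPolynomial.eval (A *ᵥ z) q) := fun z => by
    have : A *ᵥ (-z) = (-1 : ℝ) • (A *ᵥ z) := by rw [Matrix.mulVec_neg]; simp
    rw [this, eval_smul_hom hp, eval_smul_hom hq]
    have h1 : (-1 : ℝ) ^ a * (-1) ^ b = -1 := by rw [← pow_add]; exact hab.neg_one_pow
    linear_combination
      (MvPolynomial.eval (A *ᵥ z) p * MvPolynomial.eval (A *ᵥ z) q) * h1
  simp only [he] at h
  rw [integral_neg] at h
  linarith

/-- Covariance propagation through a nonlinear (polynomial) map `θ` with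
`θ(0) = 0`: under a centered Gaussian with covariance `tΣ`, the second moment
of `θ` equals `t · Dθ(0) Σ Dθ(0)ᵀ` up to an error of order `t²`. -/
theorem stmt_14 (m : ℕ) (hm : 0 < m) (A : Matrix (Fin m) (Fin m) ℝ)
    (θ : (Fin m → ℝ) → (Fin m → ℝ))
    (hpoly : ∀ i : Fin m, ∃ P : MvPolynomial (Fin m) ℝ,
      ∀ v : Fin m → ℝ, θ v i = MvPolynomial.eval v P)
    (h0 : θ 0 = 0)
    (L : (Fin m → ℝ) →L[ℝ] (Fin m → ℝ))
    (hL : HasFDerivAt θ L 0) :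
    ∃ C : ℝ, 0 ≤ C ∧
      ∀ t ∈ Set.Ioc (0 : ℝ) 1, ∀ i j : Fin m,
        |(∫ z, θ (Real.sqrt t • (A *ᵥ z)) i * θ (Real.sqrt t • (A *ᵥ z)) j
            ∂(Measure.pi fun _ : Fin m => gaussianReal 0 1)) -
          t * ((LinearMap.toMatrix' (L : (Fin m → ℝ) →ₗ[ℝ] (Fin m → ℝ))) * (A * Aᵀ) *
              (LinearMap.toMatrix' (L : (Fin m → ℝ) →ₗ[ℝ] (Fin m → ℝ)))ᵀ) i j| ≤
          C * t ^ 2 := by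
  choose P hP using hpoly
  set γ := (Measure.pi fun _ : Fin m => gaussianReal 0 1) with hγ
  set M : Fin m → Fin m → ℕ → ℕ → ℝ := fun i j a b =>
    ∫ z, MvPolynomial.eval (A *ᵥ z) (MvPolynomial.homogeneousComponent a (P i)) *
      MvPolynomial.eval (A *ᵥ z) (MvPolynomial.homogeneousComponent b (P j)) ∂γ with hM
  set N : Fin m → ℕ := fun i => (P i).totalDegree + 1 with hN
  have hc0 : ∀ i, MvPolynomial.homogeneousComponent 0 (P i) = 0 := fun i => by
    rw [MvPolynomial.homogeneousComponent_zero]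
    have h := hP i 0
    rw [h0, MvPolynomial.eval_zero] at h
    rw [← MvPolynomial.constantCoeff_eq, ← h]
    simp
  have hc1 : ∀ i x, MvPolynomial.eval x (MvPolynomial.homogeneousComponent 1 (P i)) = L x i := by
    intro i x
    have h := (hasFDerivAt_pi'.1 hL) i
    simp only [hP] at h
    rw [eval_hom_one (P i) _ h x]
    rfl
  have hM11 : ∀ i j, M i j 1 1 = ((LinearMap.toMatrix' (L : (Fin m → ℝ) →ₗ[ℝ] (Fin m → ℝ))) *
      (A * Aᵀ) * (LinearMap.toMatrix' (L : (Fin m → ℝ) →ₗ[ℝ] (Fin m → ℝ)))ᵀ) i j := by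
    intro i j
    have hB : ∀ z, L (A *ᵥ z) =
        (LinearMap.toMatrix' (L : (Fin m → ℝ) →ₗ[ℝ] (Fin m → ℝ)) * A) *ᵥ z := fun z => by
      rw [← Matrix.mulVec_mulVec, LinearMap.toMatrix'_mulVec]
      rfl
    simp only [hM, hc1, hB]
    rw [gauss_linear, Matrix.transpose_mul]
    simp only [Matrix.mul_assoc]
  have hM0 : ∀ i j a b, (a = 0 ∨ b = 0 ∨ Odd (a + b)) → M i j a b = 0 := by
    intro i j a b h
    rcases h with h | h | h
    · subst h; simp [hM, hc0]
    · subst h; simp [hM, hc0]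
    · exact gauss_odd A (MvPolynomial.homogeneousComponent_isHomogeneous a _)
        (MvPolynomial.homogeneousComponent_isHomogeneous b _) h
  have hMbig : ∀ i j a b, (a ∉ Finset.range (N i) ∨ b ∉ Finset.range (N j)) → M i j a b = 0 := by
    intro i j a b h
    rcases h with h | h
    · have : MvPolynomial.homogeneousComponent a (P i) = 0 :=
        MvPolynomial.homogeneousComponent_eq_zero _ _ (by simp [hN] at h; omega)
      simp [hM, this]
    · have : MvPolynomial.homogeneousComponent b (P j) = 0 :=
        MvPolynomial.homogeneousComponent_eq_zero _ _ (by simp [hN] at h; omega)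
      simp [hM, this]
  have hIntegral : ∀ (s : ℝ) i j, ∫ z, θ (s • (A *ᵥ z)) i * θ (s • (A *ᵥ z)) j ∂γ =
      ∑ a ∈ Finset.range (N i), ∑ b ∈ Finset.range (N j), s ^ (a + b) * M i j a b := by
    intro s i j
    have he : ∀ z, θ (s • (A *ᵥ z)) i * θ (s • (A *ᵥ z)) j =
        ∑ a ∈ Finset.range (N i), ∑ b ∈ Finset.range (N j), s ^ (a + b) *
        (MvPolynomial.eval (A *ᵥ z) (MvPolynomial.homogeneousComponent a (P i)) *
        MvPolynomial.eval (A *ᵥ z) (MvPolynomial.homogeneousComponent b (P j))) := fun z => by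
      rw [hP, hP, eval_smul_sum, eval_smul_sum, Finset.sum_mul_sum]
      refine Finset.sum_congr rfl fun k _ => Finset.sum_congr rfl fun l _ => by ring
    simp_rw [he]
    rw [integral_finsetSum _ fun k _ => integrable_finsetSum _ fun l _ =>
      (integrable_eval_mul A _ _).const_mul _]
    refine Finset.sum_congr rfl fun k _ => ?_
    rw [integral_finsetSum _ fun l _ => (integrable_eval_mul A _ _).const_mul _]
    simp_rw [integral_const_mul]
    rfl
  set K : Fin m → Fin m → ℝ := fun i j =>
    ∑ a ∈ Finset.range (N i), ∑ b ∈ Finset.range (N j), |M i j a b| with hK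
  have hK0 : ∀ i j, 0 ≤ K i j := fun i j =>
    Finset.sum_nonneg fun _ _ => Finset.sum_nonneg fun _ _ => abs_nonneg _
  refine ⟨∑ i, ∑ j, K i j, Finset.sum_nonneg fun i _ => Finset.sum_nonneg fun j _ => hK0 i j, ?_⟩
  rintro t ⟨ht0, ht1⟩ i j
  have hKle : K i j ≤ ∑ i, ∑ j, K i j :=
    (Finset.single_le_sum (f := fun j => K i j) (fun j _ => hK0 i j) (Finset.mem_univ j)).trans
      (Finset.single_le_sum (f := fun i => ∑ j, K i j)
        (fun i _ => Finset.sum_nonneg fun j _ => hK0 i j) (Finset.mem_univ i))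
  refine le_trans ?_ (mul_le_mul_of_nonneg_right hKle (sq_nonneg t))
  rw [hIntegral, ← hM11]
  set s := Real.sqrt t with hs
  have hst : s ^ 2 = t := Real.sq_sqrt ht0.le
  have hs0 : 0 ≤ s := Real.sqrt_nonneg t
  have hs1 : s ≤ 1 := by rw [hs]; exact Real.sqrt_le_one.2 ht1
  have hmain : t * M i j 1 1 = ∑ a ∈ Finset.range (N i), ∑ b ∈ Finset.range (N j),
      if a = 1 ∧ b = 1 then t * M i j 1 1 else 0 := by
    simp only [ite_and, Finset.sum_ite_irrel, Finset.sum_ite_eq', Finset.sum_const_zero]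
    split_ifs with h1 h2
    · rfl
    · rw [hMbig i j 1 1 (Or.inr h2)]; simp
    · rw [hMbig i j 1 1 (Or.inl h1)]; simp
  rw [hmain, ← Finset.sum_sub_distrib, hK, Finset.sum_mul]
  refine (Finset.abs_sum_le_sum_abs _ _).trans (Finset.sum_le_sum fun a _ => ?_)
  rw [← Finset.sum_sub_distrib, Finset.sum_mul]
  refine (Finset.abs_sum_le_sum_abs _ _).trans (Finset.sum_le_sum fun b _ => ?_)
  have hnn : 0 ≤ |M i j a b| * t ^ 2 := by positivity
  by_cases h11 : a = 1 ∧ b = 1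
  · obtain ⟨rfl, rfl⟩ := h11
    rw [if_pos ⟨rfl, rfl⟩, show (1 + 1 : ℕ) = 2 from rfl, hst, sub_self, abs_zero]
    exact hnn
  · rw [if_neg h11, sub_zero]
    by_cases hz : a = 0 ∨ b = 0 ∨ Odd (a + b)
    · rw [hM0 i j a b hz]; simp
    · push Not at hz
      obtain ⟨ha, hb, hodd⟩ := hz
      have h4 : 4 ≤ a + b := by
        rw [Nat.not_odd_iff_even] at hodd
        obtain ⟨r, hr⟩ := hodd
        omega
      rw [abs_mul, abs_of_nonneg (pow_nonneg hs0 _), mul_comm]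
      refine mul_le_mul_of_nonneg_left ?_ (abs_nonneg _)
      calc s ^ (a + b) ≤ s ^ 4 := pow_le_pow_of_le_one hs0 hs1 h4
        _ = t ^ 2 := by rw [← hst]; ring
end
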